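/- Let n ≥ 2 and let x_1, …, x_n be real numbers, not all equal. Then for every θ ∈ ℍ one has Im(q(θ)) < 0; that is, q maps the open upper half-plane into the open lower half-plane. -/

import Mathlib

open Complex Finset

/-- The polynomial `h(θ) = ∏ (x_j − θ)`. -/
noncomputable def hpoly {n : ℕ} (x : Fin n → ℝ) : ℂ → ℂ :=
  fun θ => ∏ j, ((x j : ℂ) - θ)

/-- `q(θ) = θ − n·h(θ)/h'(θ)`. -/
noncomputable def qmap {n : ℕ} (x : Fin n → ℝ) : ℂ → ℂ :=
  fun θ => θ - (n : ℂ) * hpoly x θ / deriv (hpoly x) θ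

theorem aux_cs {n : ℕ} (hn : 0 < n) (w : Fin n → ℂ) (hw : ∃ i j, w i ≠ w j) :
    normSq (∑ j, w j) < n * ∑ j, normSq (w j) := by
  have hn' : (0 : ℝ) < n := by exact_mod_cast hn
  set S := ∑ j, w j with hS
  have h1 : 0 < ∑ j, normSq ((n : ℂ) * w j - S) := by
    apply Finset.sum_pos' (fun i _ => normSq_nonneg _)
    by_contra hcon
    push Not at hcon
    obtain ⟨i, j, hij⟩ := hw
    have key : ∀ k, (n : ℂ) * w k = S := fun k => by
      have := le_antisymm (hcon k (Finset.mem_univ k)) (normSq_nonneg _)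
      exact sub_eq_zero.1 (normSq_eq_zero.1 this)
    have hnc : (n : ℂ) ≠ 0 := by exact_mod_cast hn.ne'
    exact hij (mul_left_cancel₀ hnc ((key i).trans (key j).symm))
  have hre : S.re = ∑ j, (w j).re := by rw [hS, Complex.re_sum]
  have him : S.im = ∑ j, (w j).im := by rw [hS, Complex.im_sum]
  have h2 : ∑ j, normSq ((n : ℂ) * w j - S)
      = n * (n * ∑ j, normSq (w j) - normSq S) := by
    have : ∀ j, normSq ((n : ℂ) * w j - S) = n^2 * normSq (w j)
        - 2 * n * S.re * (w j).re - 2 * n * S.im * (w j).im + normSq S := by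
      intro j
      simp only [normSq_apply, sub_re, sub_im, mul_re, mul_im, natCast_re, natCast_im]
      ring
    simp only [this, Finset.sum_add_distrib, Finset.sum_sub_distrib, ← Finset.mul_sum]
    rw [← hre, ← him]
    simp [normSq_apply]
    ring
  rw [h2] at h1
  have := pos_of_mul_pos_right h1 hn'.le
  linarith

theorem stmt_4 (n : ℕ) (hn : 2 ≤ n) (x : Fin n → ℝ)
    (hx : ∃ i j, x i ≠ x j) :
    ∀ θ : ℂ, 0 < θ.im → (qmap x θ).im < 0 := by
  intro θ hθ
  have hne : ∀ j, (x j : ℂ) - θ ≠ 0 := fun j h => by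
    have := congrArg Complex.im h
    simp at this
    exact hθ.ne' this
  set w : Fin n → ℂ := fun j => ((x j : ℂ) - θ)⁻¹ with hw
  have hh : hpoly x θ ≠ 0 := Finset.prod_ne_zero_iff.2 fun j _ => hne j
  have hd : deriv (hpoly x) θ = - (hpoly x θ * ∑ j, w j) := by
    have h0 : HasDerivAt (hpoly x)
        (∑ i, (∏ j ∈ Finset.univ.erase i, ((x j : ℂ) - θ)) • (-1 : ℂ)) θ :=
      HasDerivAt.fun_finsetProd (u := Finset.univ) (f := fun j θ => (x j : ℂ) - θ)
        (fun i _ => (hasDerivAt_id θ).const_sub (x i : ℂ))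
    rw [h0.deriv, Finset.mul_sum, ← Finset.sum_neg_distrib]
    refine Finset.sum_congr rfl fun i _ => ?_
    have : hpoly x θ = ((x i : ℂ) - θ) * ∏ j ∈ Finset.univ.erase i, ((x j : ℂ) - θ) :=
      (Finset.mul_prod_erase _ _ (Finset.mem_univ i)).symm
    rw [this]
    have := hne i
    simp only [hw, smul_eq_mul]
    field_simp
  have hwim : ∀ j, (w j).im = θ.im * normSq (w j) := fun j => by
    simp only [hw, inv_im, normSq_inv, sub_im, ofReal_im]
    ring
  have hcs := aux_cs (by omega : 0 < n) w (by
    obtain ⟨i, j, hij⟩ := hx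
    refine ⟨i, j, fun h => hij ?_⟩
    have := inv_injective h
    exact_mod_cast sub_left_injective this)
  set S := ∑ j, w j with hS
  have hSim : S.im = θ.im * ∑ j, normSq (w j) := by
    rw [hS, Complex.im_sum, Finset.mul_sum]
    exact Finset.sum_congr rfl fun j _ => hwim j
  have hn' : (0 : ℝ) < n := by exact_mod_cast (by omega : 0 < n)
  have hpos : 0 < ∑ j, normSq (w j) :=
    pos_of_mul_pos_right (lt_of_le_of_lt (normSq_nonneg _) hcs) hn'.le
  have hS0 : S ≠ 0 := fun h => by
    have : 0 < S.im := hSim ▸ mul_pos hθ hpos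
    simp [h] at this
  have hq : qmap x θ = θ + (n : ℂ) * S⁻¹ := by
    simp only [qmap, hd]
    field_simp
    ring
  have hSS : 0 < normSq S := normSq_pos.2 hS0
  rw [hq]
  simp only [add_im, mul_im, natCast_re, natCast_im, zero_mul, add_zero, inv_im, hSim]
  have : θ.im + n * (-(θ.im * ∑ j, normSq (w j)) / normSq S)
      = θ.im * (normSq S - n * ∑ j, normSq (w j)) / normSq S := by
    field_simp
    ring
  rw [this]
  exact div_neg_of_neg_of_pos (mul_neg_of_pos_of_neg hθ (by linarith)) hSS
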